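/- There exist constants K > 0 and n₀ such that for every n = 2^k with n ≥ n₀ there exists a strategy with shared randomness (a probability distribution over deterministic strategies) for the non-local Hidden Matching game HM_nl(n) such that for every input pair (x, M), the probability over the shared randomness of winning is at least 1/2 + K/√n. -/

import Mathlib

open scoped Classical
open Finset

/-- Inner product mod 2 on `{0,1}^k`, as a Boolean. -/
def bdot {k : ℕ} (a b : Fin k → Bool) : Bool :=
  decide ((Finset.univ.filter fun t => a t && b t).card % 2 = 1)

/-- Bitwise XOR on `{0,1}^k`. -/
def bxor {k : ℕ} (a b : Fin k → Bool) : Fin k → Bool := fun t => xor (a t) (b t)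

/-- A perfect matching on `{0,1}^k`, represented as a fixed-point-free involution:
the pair `(i, M i)` is matched for every `i`. -/
def MatchingV (k : ℕ) : Type :=
  {M : (Fin k → Bool) → (Fin k → Bool) // (∀ i, M (M i) = i) ∧ ∀ i, M i ≠ i}

noncomputable instance (k : ℕ) : Fintype (MatchingV k) :=
  Subtype.fintype _

/-!
The parties share a uniform `a ∈ {0,1}^k` and a uniform mask `y ∈ {0,1}^n`. Bob always plays the
pair `{0, j}` of his matching that contains `0`, with `d = y_j`. Alice computes
`z_t = y_t ⊕ x_t ⊕ x_0`, which is uniform, and answers `0` if at most `h` of the bits `z_t` are `1`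
and `a` otherwise. They win iff Alice's answer `c` satisfies `c · j = z_j`. Averaging
`(-1)^(c · j)` over `a` gives `1` if `c = 0` and `0` if `c = a`, because `j ≠ 0`. So the bias is
half of the correlation of `(-1)^(z_j)` with the event that `z` has at most `h` ones; flipping `z_j`
shows that this correlation is `(n-1 choose h) / 2^n`, which is of order `1 / √n` for
`h = ⌊(n-1)/2⌋`.
-/

open scoped symmDiff BigOperators

section Signs

/-- The sign `(-1)^b` of a bit `b`, through which winning probabilities become averages of products
of signs. -/
def boolSign (b : Bool) : ℝ := if b then -1 else 1

lemma boolSign_xor (b c : Bool) : boolSign (xor b c) = boolSign b * boolSign c := by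
  cases b <;> cases c <;> simp [boolSign]

lemma ite_eq_eq_boolSign (b c : Bool) :
    (if b = c then (1 : ℝ) else 0) = (1 + boolSign b * boolSign c) / 2 := by
  cases b <;> cases c <;> norm_num [boolSign]

lemma sum_boolSign_and (c : Bool) : ∑ b, boolSign (b && c) = if c then 0 else 2 := by
  cases c <;> norm_num [boolSign]

lemma boolSign_mem_symmDiff {α : Type*} [DecidableEq α] (i : α) (S T : Finset α) :
    boolSign (decide (i ∈ S ∆ T)) = boolSign (decide (i ∈ S)) * boolSign (decide (i ∈ T)) := by
  by_cases hS : i ∈ S <;> by_cases hT : i ∈ T <;> simp [boolSign, mem_symmDiff, hS, hT]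

variable {k : ℕ}

lemma boolSign_bdot (a b : Fin k → Bool) :
    boolSign (bdot a b) = ∏ t, boolSign (a t && b t) := by
  simp [boolSign, bdot, prod_ite, neg_one_pow_eq_ite, ← Nat.odd_iff, ← Nat.not_even_iff_odd]

@[simp]
lemma bdot_bot_left (b : Fin k → Bool) : bdot ⊥ b = false := by
  simp [bdot]

@[simp]
lemma bxor_bot_left (b : Fin k → Bool) : bxor ⊥ b = b := by
  funext t
  simp [bxor]

lemma sum_boolSign_bdot {b : Fin k → Bool} (hb : b ≠ ⊥) : ∑ a, boolSign (bdot a b) = 0 := by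
  obtain ⟨t, ht⟩ : ∃ t, b t = true := by simpa [Function.ne_iff] using hb
  calc ∑ a, boolSign (bdot a b) = ∏ s, ∑ c, boolSign (c && b s) := by
        simp only [boolSign_bdot, Fintype.prod_sum]
    _ = 0 := prod_eq_zero (mem_univ t) (by rw [sum_boolSign_and, if_pos ht])

lemma expect_boolSign_bdot_ite {b : Fin k → Bool} (hb : b ≠ ⊥) (p : Prop) [Decidable p] :
    𝔼 a : Fin k → Bool, boolSign (bdot (if p then ⊥ else a) b) = if p then 1 else 0 := by
  split_ifs
  · simp [boolSign]
  · rw [Fintype.expect_eq_sum_div_card, sum_boolSign_bdot hb, zero_div]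

end Signs

lemma sum_boolSign_mem_of_card_le {α : Type*} [Fintype α] [DecidableEq α] (j : α) (h : ℕ) :
    ∑ S : Finset α, (if #S ≤ h then boolSign (decide (j ∈ S)) else 0) =
      (Fintype.card α - 1).choose h := by
  -- Pairing `S` with `insert j S`, only the sets `S` of size exactly `h` do not cancel.
  have pair_sum : ∀ S ∈ (univ.erase j).powerset,
      (if #S ≤ h then boolSign (decide (j ∈ S)) else 0) +
        (if #(insert j S) ≤ h then boolSign (decide (j ∈ insert j S)) else 0) =
      if #S = h then 1 else 0 := by
    intro S hS
    have hj : j ∉ S := fun hjS => notMem_erase j univ (mem_powerset.1 hS hjS)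
    rw [card_insert_of_notMem hj]
    simp only [hj, mem_insert_self, boolSign, decide_true, decide_false]
    grind
  calc ∑ S : Finset α, (if #S ≤ h then boolSign (decide (j ∈ S)) else 0)
      = ∑ S ∈ (univ.erase j).powerset, if #S = h then (1 : ℝ) else 0 := by
        rw [← sum_congr rfl pair_sum, sum_add_distrib, ← sum_powerset_insert (notMem_erase j univ),
          insert_erase (mem_univ j), powerset_univ]
    _ = (Fintype.card α - 1).choose h := by
        rw [sum_boole, ← powersetCard_eq_filter, card_powersetCard, card_erase_of_mem (mem_univ j),
          card_univ]

lemma sixteen_pow_le_mul_centralBinom_sq (m : ℕ) :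
    16 ^ m ≤ (4 * m + 1) * m.centralBinom ^ 2 := by
  induction m with
  | zero => simp
  | succ m ih =>
    refine Nat.le_of_mul_le_mul_left ?_ (pow_pos m.succ_pos 2)
    calc (m + 1) ^ 2 * 16 ^ (m + 1) = 16 * (m + 1) ^ 2 * 16 ^ m := by ring
      _ ≤ 16 * (m + 1) ^ 2 * ((4 * m + 1) * m.centralBinom ^ 2) := by gcongr
      _ = 16 * ((m + 1) ^ 2 * (4 * m + 1)) * m.centralBinom ^ 2 := by ring
      _ ≤ 4 * ((4 * m + 5) * (2 * m + 1) ^ 2) * m.centralBinom ^ 2 := by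
        gcongr ?_ * _
        linarith
      _ = (4 * m + 5) * (2 * (2 * m + 1) * m.centralBinom) ^ 2 := by ring
      _ = (m + 1) ^ 2 * ((4 * (m + 1) + 1) * (m + 1).centralBinom ^ 2) := by
        rw [← Nat.succ_mul_centralBinom_succ]
        ring

lemma four_pow_le_mul_choose_half_sq (n : ℕ) :
    4 ^ n ≤ 4 * (n + 1) * n.choose (n / 2) ^ 2 := by
  obtain ⟨m, rfl | rfl⟩ := n.even_or_odd'
  · calc 4 ^ (2 * m) = 16 ^ m := by rw [pow_mul]; norm_num
      _ ≤ (4 * m + 1) * m.centralBinom ^ 2 := sixteen_pow_le_mul_centralBinom_sq m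
      _ ≤ 4 * (2 * m + 1) * (2 * m).choose (2 * m / 2) ^ 2 := by
        rw [Nat.mul_div_cancel_left m two_pos, ← Nat.centralBinom_eq_two_mul_choose]
        gcongr
        omega
  · have centralBinom_le :
        (m + 1).centralBinom ≤ 2 * (2 * m + 1).choose ((2 * m + 1) / 2) := by
      rw [Nat.centralBinom_eq_two_mul_choose, mul_add_one, Nat.choose_succ_succ',
        two_mul (Nat.choose _ _)]
      gcongr <;> exact Nat.choose_le_middle _ _
    refine Nat.le_of_mul_le_mul_left ?_ four_pos
    calc 4 * 4 ^ (2 * m + 1) = 16 ^ (m + 1) := by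
          rw [show 16 = 4 ^ 2 by rfl, ← pow_mul]
          ring
      _ ≤ (4 * (m + 1) + 1) * (m + 1).centralBinom ^ 2 := sixteen_pow_le_mul_centralBinom_sq _
      _ ≤ 4 * (2 * m + 1 + 1) * (2 * (2 * m + 1).choose ((2 * m + 1) / 2)) ^ 2 := by
        gcongr
        omega
      _ = _ := by ring

lemma inv_sqrt_le_choose_half_div_two_pow (n : ℕ) :
    1 / (4 * √((n + 1 : ℕ) : ℝ)) ≤ n.choose (n / 2) / 2 ^ (n + 1) := by
  have two_pow_le : (2 : ℝ) ^ n ≤ n.choose (n / 2) * (2 * √((n + 1 : ℕ) : ℝ)) := by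
    refine le_of_sq_le_sq ?_ (by positivity)
    calc ((2 : ℝ) ^ n) ^ 2 = 4 ^ n := by rw [pow_right_comm]; norm_num
      _ ≤ 4 * (n + 1 : ℕ) * n.choose (n / 2) ^ 2 := mod_cast four_pow_le_mul_choose_half_sq n
      _ = (n.choose (n / 2) * (2 * √((n + 1 : ℕ) : ℝ))) ^ 2 := by
        rw [mul_pow, mul_pow, Real.sq_sqrt (Nat.cast_nonneg _)]
        ring
  rw [div_le_div_iff₀ (by positivity) (by positivity)]
  linarith [pow_succ (2 : ℝ) n]

section Strategy

variable {k : ℕ}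

/-- The payoff of the game on inputs `x` and `M`: `1` if the answers `a` of Alice and
`b = (i, d)` of Bob win, and `0` otherwise. Bob's pair `(i, M i)` is given by its element `i`. -/
def payoff (x : (Fin k → Bool) → Bool) (M : MatchingV k) (a : Fin k → Bool)
    (b : (Fin k → Bool) × Bool) : ℝ :=
  if xor (bdot a (bxor b.1 (M.1 b.1))) b.2 = xor (x b.1) (x (M.1 b.1)) then 1 else 0

/-- The shared randomness: a vector `a ∈ {0,1}^k`, and a subset of `{0,1}^k`, the support of
the mask `y ∈ {0,1}^n`. -/
abbrev SharedRandomness (k : ℕ) : Type := (Fin k → Bool) × Finset (Fin k → Bool)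

/-- The support of `t ↦ x_t ⊕ x_0`, which Alice masks with the shared `y`; the index `0^k` is
written `⊥`. -/
def originDisagreement (x : (Fin k → Bool) → Bool) : Finset (Fin k → Bool) := {i | x i ≠ x ⊥}

/-- Alice masks the disagreement set of her input; she answers `0^k` if the result has at most `h`
elements, and the shared vector otherwise. -/
def aliceAnswer (h : ℕ) (r : SharedRandomness k) (x : (Fin k → Bool) → Bool) : Fin k → Bool :=
  if #(r.2 ∆ originDisagreement x) ≤ h then ⊥ else r.1

/-- Bob answers the pair containing `0^k` together with the mask bit of its other element. -/
def bobAnswer (r : SharedRandomness k) (M : MatchingV k) : (Fin k → Bool) × Bool :=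
  (⊥, decide (M.1 ⊥ ∈ r.2))

lemma payoff_bobAnswer (x : (Fin k → Bool) → Bool) (M : MatchingV k) (a : Fin k → Bool)
    (r : SharedRandomness k) :
    payoff x M a (bobAnswer r M) =
      (1 + boolSign (bdot a (M.1 ⊥)) *
        boolSign (decide (M.1 ⊥ ∈ r.2 ∆ originDisagreement x))) / 2 := by
  have mem_disagreement :
      decide (M.1 ⊥ ∈ originDisagreement x) = xor (x ⊥) (x (M.1 ⊥)) := by
    cases hx : x ⊥ <;> cases hy : x (M.1 ⊥) <;> simp [originDisagreement, hx, hy]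
  simp only [payoff, bobAnswer, bxor_bot_left, ite_eq_eq_boolSign, boolSign_xor,
    boolSign_mem_symmDiff, mem_disagreement, mul_assoc]

lemma expect_aliceAnswer_correlation (h : ℕ) (x : (Fin k → Bool) → Bool) {j : Fin k → Bool}
    (hj : j ≠ ⊥) :
    𝔼 r : SharedRandomness k, boolSign (bdot (aliceAnswer h r x) j) *
        boolSign (decide (j ∈ r.2 ∆ originDisagreement x)) =
      (2 ^ k - 1).choose h / 2 ^ 2 ^ k := by
  set U := originDisagreement x
  calc 𝔼 r : SharedRandomness k, boolSign (bdot (aliceAnswer h r x) j) *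
          boolSign (decide (j ∈ r.2 ∆ U))
      = 𝔼 Y : Finset (Fin k → Bool), (𝔼 a, boolSign (bdot (if #(Y ∆ U) ≤ h then ⊥ else a) j)) *
          boolSign (decide (j ∈ Y ∆ U)) := by
        simp only [← univ_product_univ, expect_product, aliceAnswer, expect_mul]
        exact expect_comm _ _ _
    _ = 𝔼 Y : Finset (Fin k → Bool),
          if #(Y ∆ U) ≤ h then boolSign (decide (j ∈ Y ∆ U)) else 0 := by
        simp only [expect_boolSign_bdot_ite hj, ite_mul, one_mul, zero_mul]
    _ = 𝔼 Z : Finset (Fin k → Bool), if #Z ≤ h then boolSign (decide (j ∈ Z)) else 0 :=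
        Fintype.expect_bijective _ (symmDiff_left_involutive U).bijective _ _ fun _ => rfl
    _ = _ := by
        rw [Fintype.expect_eq_sum_div_card, sum_boolSign_mem_of_card_le]
        simp

lemma expect_payoff (h : ℕ) (x : (Fin k → Bool) → Bool) (M : MatchingV k) :
    𝔼 r, payoff x M (aliceAnswer h r x) (bobAnswer r M) =
      1 / 2 + (2 ^ k - 1).choose h / 2 ^ 2 ^ k / 2 := by
  simp only [payoff_bobAnswer]
  rw [← expect_div, expect_add_distrib, Fintype.expect_one,
    expect_aliceAnswer_correlation h x (M.2.2 ⊥), add_div]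

end Strategy

/-- There are constants `K > 0` and `n₀` such that for every `n = 2^k ≥ n₀`
there is a strategy with shared randomness (a finitely supported probability
distribution, with weights `w`, over deterministic strategies `(A r, Bob r)`) for the
non-local Hidden Matching game which, for EVERY input pair `(x, M)`, wins with
probability at least `1/2 + K/√n` over the shared randomness. -/
theorem hidden_matching_nonlocal_randomized_strategy :
    ∃ K : ℝ, 0 < K ∧ ∃ n₀ : ℕ,
      ∀ k : ℕ, n₀ ≤ 2 ^ k →
      ∃ (R : Type) (_ : Fintype R) (w : R → ℝ)
        (A : R → ((Fin k → Bool) → Bool) → (Fin k → Bool))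
        (Bob : R → MatchingV k → (Fin k → Bool) × Bool),
        (∀ r, 0 ≤ w r) ∧ (∑ r, w r) = 1 ∧
        ∀ (x : (Fin k → Bool) → Bool) (M : MatchingV k),
          1 / 2 + K / Real.sqrt (2 ^ k) ≤
            ∑ r, w r *
              (if xor (bdot (A r x) (bxor (Bob r M).1 (M.1 (Bob r M).1))) (Bob r M).2
                  = xor (x (Bob r M).1) (x (M.1 (Bob r M).1))
               then (1 : ℝ) else 0) := by
  refine ⟨1 / 8, by norm_num, 0, fun k _ => ⟨SharedRandomness k, inferInstance,
    fun _ => (Fintype.card (SharedRandomness k) : ℝ)⁻¹, aliceAnswer ((2 ^ k - 1) / 2), bobAnswer,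
    fun _ => by positivity, ?_, fun x M => ?_⟩⟩
  · rw [sum_const, card_univ, nsmul_eq_mul,
      mul_inv_cancel₀ (Nat.cast_ne_zero.2 Fintype.card_ne_zero)]
  have win_probability := expect_payoff ((2 ^ k - 1) / 2) x M
  simp only [payoff] at win_probability
  have choose_bound := inv_sqrt_le_choose_half_div_two_pow (2 ^ k - 1)
  rw [Nat.sub_add_cancel Nat.one_le_two_pow, Nat.cast_pow, Nat.cast_ofNat] at choose_bound
  rw [← mul_sum, ← div_eq_inv_mul, ← Fintype.expect_eq_sum_div_card, win_probability]
  calc 1 / 2 + 1 / 8 / √(2 ^ k : ℝ) = 1 / 2 + 1 / (4 * √(2 ^ k : ℝ)) / 2 := by ring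
    _ ≤ _ := by gcongr
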